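/- Let G ≤ PL₊(I) and let H be any subgroup of the split group S(G) with G ≤ H ≤ S(G). Then the derived length of G equals the derived length of H (in particular, G is soluble if and only if H is soluble). -/

import Mathlib

open Set

namespace PLPaper

/-- We model `PL₊(I)` inside the group of bijections of `ℝ` with *opposite*
composition, so that the group acts on `ℝ` on the right:
`x · (g * h) = (x · g) · h`. -/
abbrev PermR : Type := (Equiv.Perm ℝ)ᵐᵒᵖ

/-- The (right) action of `g` on the point `x`. -/
def ap (g : PermR) (x : ℝ) : ℝ := g.unop x

/-- `g` is affine on a neighbourhood of `x`. -/
def IsLocallyAffineAt (g : PermR) (x : ℝ) : Prop :=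
  ∃ m b : ℝ, ∀ᶠ y in nhds x, ap g y = m * y + b

/-- The breakpoints of `g`: points of `(0,1)` where `g` is not locally affine
(equivalently, for a PL map, where the derivative fails to exist). -/
def Breakpoints (g : PermR) : Set ℝ :=
  {x ∈ Ioo (0:ℝ) 1 | ¬ IsLocallyAffineAt g x}

/-- `g` is an orientation-preserving piecewise-linear homeomorphism of `[0,1]`
(extended by the identity to all of `ℝ`), with finitely many breakpoints. -/
def IsPL (g : PermR) : Prop :=
  StrictMono (ap g) ∧ (∀ x ∉ Ioo (0:ℝ) 1, ap g x = x) ∧ (Breakpoints g).Finite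

/-- The support of `g`. -/
def Supp (g : PermR) : Set ℝ := {x | ap g x ≠ x}

/-- `(a,b)` is an orbital of `g`, i.e. a connected component of `Supp g`. -/
def IsOrbital (g : PermR) (a b : ℝ) : Prop :=
  a < b ∧ Ioo a b ⊆ Supp g ∧ a ∉ Supp g ∧ b ∉ Supp g

/-- The support of a subgroup `G`. -/
def GSupp (G : Subgroup PermR) : Set ℝ := ⋃ g ∈ (G : Set PermR), Supp g

/-- `(a,b)` is an orbital of the group `G`, i.e. a connected component of its support. -/
def IsGroupOrbital (G : Subgroup PermR) (a b : ℝ) : Prop :=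
  a < b ∧ Ioo a b ⊆ GSupp G ∧ a ∉ GSupp G ∧ b ∉ GSupp G

/-- The pair `g, h` carries a transition chain: orbitals `(a,b)` of `g` and
`(c,d)` of `h` with `a < c < b < d`. -/
def ElemsTransitionChain (g h : PermR) : Prop :=
  ∃ a b c d : ℝ, IsOrbital g a b ∧ IsOrbital h c d ∧ a < c ∧ c < b ∧ b < d

/-- The pair `g, h` carries a one-sided overlap: orbitals `(a,b)` of `g` and
`(a,c)` of `h`, or `(a,b)` of `g` and `(c,b)` of `h`, where `a < c < b`. -/
def ElemsOneSidedOverlap (g h : PermR) : Prop :=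
  ∃ a b c : ℝ, a < c ∧ c < b ∧
    ((IsOrbital g a b ∧ IsOrbital h a c) ∨ (IsOrbital g a b ∧ IsOrbital h c b))

def AdmitsTransitionChain (G : Subgroup PermR) : Prop :=
  ∃ g ∈ G, ∃ h ∈ G, ElemsTransitionChain g h

def AdmitsOneSidedOverlap (G : Subgroup PermR) : Prop :=
  ∃ g ∈ G, ∃ h ∈ G, ElemsOneSidedOverlap g h

/-- `G` admits a bad overlap: orbitals `A` of `f ∈ G` and `B` of `g ∈ G` which
intersect, are distinct, and neither closure is contained in the other orbital. -/
def AdmitsBadOverlap (G : Subgroup PermR) : Prop :=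
  ∃ f ∈ G, ∃ g ∈ G, ∃ a b c d : ℝ, IsOrbital f a b ∧ IsOrbital g c d ∧
    (Ioo a b ∩ Ioo c d).Nonempty ∧ Ioo a b ≠ Ioo c d ∧
    ¬ Icc a b ⊆ Ioo c d ∧ ¬ Icc c d ⊆ Ioo a b

/-- A tower: a set of signed orbitals `((a,b), g)` with pairwise nested orbitals,
where equal orbitals force equal signatures. -/
def IsTower (T : Set ((ℝ × ℝ) × PermR)) : Prop :=
  (∀ p ∈ T, IsOrbital p.2 p.1.1 p.1.2) ∧
  (∀ p ∈ T, ∀ q ∈ T,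
      Ioo p.1.1 p.1.2 ⊆ Ioo q.1.1 q.1.2 ∨ Ioo q.1.1 q.1.2 ⊆ Ioo p.1.1 p.1.2) ∧
  (∀ p ∈ T, ∀ q ∈ T, p.1 = q.1 → p.2 = q.2)

/-- `G` admits the tower `T` if `T` is a tower all of whose signatures lie in `G`. -/
def AdmitsTower (G : Subgroup PermR) (T : Set ((ℝ × ℝ) × PermR)) : Prop :=
  IsTower T ∧ ∀ p ∈ T, p.2 ∈ G

def AdmitsInfiniteTower (G : Subgroup PermR) : Prop :=
  ∃ T : Set ((ℝ × ℝ) × PermR), AdmitsTower G T ∧ T.Infinite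

/-- The set of breakpoints of the elements of a set `S`. -/
def BreakSet (S : Set PermR) : Set ℝ := ⋃ g ∈ S, Breakpoints g

/-- The derived length of a group: the least `n` with `derivedSeries G n = ⊥`. -/
noncomputable def derivedLength (G : Type*) [Group G] : ℕ :=
  sInf {n : ℕ | derivedSeries G n = ⊥}

/-- `g` is the one-bump factor of `f` over the orbital `(a,b)` of `f`:
`g` agrees with `f` on `(a,b)` and is the identity elsewhere. -/
def IsOneBumpFactor (g f : PermR) (a b : ℝ) : Prop :=
  IsOrbital f a b ∧ (∀ x ∈ Ioo a b, ap g x = ap f x) ∧ (∀ x ∉ Ioo a b, ap g x = x)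

/-- `g` is a one-bump factor of `f`. -/
def IsFactorOf (g f : PermR) : Prop := ∃ a b : ℝ, IsOneBumpFactor g f a b

/-- `((a,b), g)` is a factor signed orbital associated to (an element of) `G`. -/
def AssociatedFactor (G : Subgroup PermR) (a b : ℝ) (g : PermR) : Prop :=
  ∃ f ∈ G, IsOneBumpFactor g f a b

/-- The split group `S(G)`: the subgroup generated by the one-bump factors of
all elements of `G`. -/
def SplitGroup (G : Subgroup PermR) : Subgroup PermR :=
  Subgroup.closure {g : PermR | ∃ f ∈ G, IsFactorOf g f}

/-! If orbitals of two elements of `G` overlap badly, then for suitable `f, g ∈ G` some component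
of the support of `⁅⟨f, g⟩, ⟨f, g⟩⁆` has both endpoints fixed by `f` and `g`. One-sided germs at a
fixed point are linear, hence commute, so the elements of this commutator subgroup are trivial near
these endpoints. Displacing their supports shows that the component survives in all further derived
subgroups: `G` is insoluble.

Otherwise any two orbitals are disjoint, equal or strictly nested. If an orbital `A` of `f` is
strictly nested in an orbital of `g`, then the factor of `f` over `A` is also a factor of
`⁅f, g ^ k⁆` for some `k : ℤ`. Hence `⁅S(G), S(G)⁆ ≤ S(⁅G, G⁆)`, and by induction the `n`-th derived
subgroup of `S(G)` lies in the split group of the `n`-th derived subgroup of `G`. -/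

section Development

open Filter Topology
open scoped commutatorElement

section DerivedSubgroup

variable {Γ : Type*} [Group Γ]

/-- The `n`-th derived subgroup of `G`, kept as a subgroup of the ambient group so that the
derived subgroups of different subgroups can be compared. -/
def derivedSubgroup (G : Subgroup Γ) : ℕ → Subgroup Γ
  | 0 => G
  | n + 1 => ⁅derivedSubgroup G n, derivedSubgroup G n⁆

theorem derivedSubgroup_mono {G H : Subgroup Γ} (h : G ≤ H) (n : ℕ) :
    derivedSubgroup G n ≤ derivedSubgroup H n := by
  induction n with
  | zero => exact h
  | succ n ih => exact Subgroup.commutator_mono ih ih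

theorem derivedSubgroup_le (G : Subgroup Γ) (n : ℕ) : derivedSubgroup G n ≤ G := by
  induction n with
  | zero => exact le_rfl
  | succ n ih => exact (Subgroup.commutator_le_self _).trans ih

theorem map_subtype_derivedSeries (G : Subgroup Γ) (n : ℕ) :
    (derivedSeries G n).map G.subtype = derivedSubgroup G n := by
  induction n with
  | zero => simp [derivedSubgroup, ← MonoidHom.range_eq_map]
  | succ n ih => rw [derivedSeries_succ, Subgroup.map_commutator, ih, derivedSubgroup]

theorem derivedSeries_eq_bot_iff (G : Subgroup Γ) (n : ℕ) :
    derivedSeries G n = ⊥ ↔ derivedSubgroup G n = ⊥ := by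
  rw [← map_subtype_derivedSeries, Subgroup.map_eq_bot_iff_of_injective _ G.subtype_injective]

end DerivedSubgroup

section ClosureGenerators

variable {Γ : Type*} [Group Γ]

theorem closure_le_normalizer_closure {S T : Set Γ}
    (hS : ∀ s ∈ S, s⁻¹ ∈ S) (hST : ∀ s ∈ S, ∀ t ∈ T, s * t * s⁻¹ ∈ Subgroup.closure T) :
    Subgroup.closure S ≤ Subgroup.normalizer (Subgroup.closure T : Set Γ) := by
  have conj_mem : ∀ s ∈ S, ∀ t ∈ Subgroup.closure T, s * t * s⁻¹ ∈ Subgroup.closure T :=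
    fun s hs t ht => (Subgroup.closure_le
      ((Subgroup.closure T).comap (MulAut.conj s).toMonoidHom)).2 (hST s hs) ht
  refine (Subgroup.closure_le _).2 fun s hs => Subgroup.mem_normalizer_iff.2 fun t =>
    ⟨conj_mem s hs t, fun ht => ?_⟩
  simpa [mul_assoc] using conj_mem s⁻¹ (hS s hs) _ ht

theorem commutator_closure_left_mem {S : Set Γ} {K : Subgroup Γ}
    (hK : Subgroup.closure S ≤ Subgroup.normalizer (K : Set Γ)) {y : Γ}
    (hy : ∀ x ∈ S, ⁅x, y⁆ ∈ K) {x : Γ} (hx : x ∈ Subgroup.closure S) : ⁅x, y⁆ ∈ K := by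
  have conj_mem : ∀ g ∈ Subgroup.closure S, ∀ k ∈ K, g * k * g⁻¹ ∈ K := fun g hg k hk =>
    (Subgroup.mem_normalizer_iff.1 (hK hg) k).1 hk
  induction hx using Subgroup.closure_induction with
  | mem x hx => exact hy x hx
  | one => simp
  | mul a b ha _ iha ihb =>
    rw [commutatorElement_mul_left_eq_conj_mul]
    exact K.mul_mem (conj_mem a ha _ ihb) iha
  | inv a ha ih =>
    have h : ⁅a⁻¹, y⁆ = a⁻¹ * ⁅a, y⁆⁻¹ * a⁻¹⁻¹ := by simp only [commutatorElement_def]; group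
    rw [h]
    exact conj_mem _ (inv_mem ha) _ (K.inv_mem ih)

theorem commutator_closure_le {S : Set Γ} {K : Subgroup Γ}
    (hK : Subgroup.closure S ≤ Subgroup.normalizer (K : Set Γ))
    (hS : ∀ x ∈ S, ∀ y ∈ S, ⁅x, y⁆ ∈ K) :
    ⁅Subgroup.closure S, Subgroup.closure S⁆ ≤ K := by
  refine Subgroup.commutator_le.2 fun x hx y hy =>
    commutator_closure_left_mem hK (fun s hs => ?_) hx
  rw [← commutatorElement_inv]
  exact K.inv_mem (commutator_closure_left_mem hK (fun t ht => hS t ht s hs) hy)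

end ClosureGenerators

section Action

@[simp]
theorem ap_mul (g h : PermR) (x : ℝ) : ap (g * h) x = ap h (ap g x) := rfl

@[simp]
theorem ap_one (x : ℝ) : ap 1 x = x := rfl

@[simp]
theorem ap_inv_ap (g : PermR) (x : ℝ) : ap g⁻¹ (ap g x) = x := g.unop.symm_apply_apply x

@[simp]
theorem ap_ap_inv (g : PermR) (x : ℝ) : ap g (ap g⁻¹ x) = x := g.unop.apply_symm_apply x

theorem ap_ext {g h : PermR} (H : ∀ x, ap g x = ap h x) : g = h :=
  MulOpposite.unop_injective (Equiv.ext H)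

theorem ap_injective (g : PermR) : Function.Injective (ap g) := g.unop.injective

theorem ap_inv_eq_iff {g : PermR} {x y : ℝ} : ap g⁻¹ x = y ↔ x = ap g y :=
  g.unop.symm_apply_eq

theorem ap_inv_eq_self_iff {g : PermR} {x : ℝ} : ap g⁻¹ x = x ↔ ap g x = x :=
  ap_inv_eq_iff.trans eq_comm

theorem notMem_supp {g : PermR} {x : ℝ} : x ∉ Supp g ↔ ap g x = x := not_not

theorem mem_gSupp {G : Subgroup PermR} {x : ℝ} : x ∈ GSupp G ↔ ∃ g ∈ G, ap g x ≠ x := by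
  simp [GSupp, Supp]

theorem notMem_gSupp {G : Subgroup PermR} {x : ℝ} : x ∉ GSupp G ↔ ∀ g ∈ G, ap g x = x := by
  simp [mem_gSupp]

theorem gSupp_mono {G H : Subgroup PermR} (h : G ≤ H) : GSupp G ⊆ GSupp H :=
  biUnion_subset_biUnion_left h

theorem strictMono_ap_inv {g : PermR} (hg : StrictMono (ap g)) : StrictMono (ap g⁻¹) :=
  fun x y hxy => hg.lt_iff_lt.1 (by simpa only [ap_ap_inv] using hxy)

theorem continuous_ap {g : PermR} (hg : StrictMono (ap g)) : Continuous (ap g) :=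
  hg.monotone.continuous_of_surjective g.unop.surjective

theorem isOpen_supp {g : PermR} (hg : StrictMono (ap g)) : IsOpen (Supp g) :=
  isOpen_ne_fun (continuous_ap hg) continuous_id

theorem isOpen_gSupp {G : Subgroup PermR} (hG : ∀ g ∈ G, StrictMono (ap g)) :
    IsOpen (GSupp G) :=
  isOpen_biUnion fun g hg => isOpen_supp (hG g hg)

theorem ap_mem_Ioo_iff {g : PermR} (hg : StrictMono (ap g)) {a b x : ℝ} (ha : ap g a = a)
    (hb : ap g b = b) : ap g x ∈ Ioo a b ↔ x ∈ Ioo a b := by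
  have hax : a < ap g x ↔ a < x := by simpa only [ha] using hg.lt_iff_lt (a := a) (b := x)
  have hxb : ap g x < b ↔ x < b := by simpa only [hb] using hg.lt_iff_lt (a := x) (b := b)
  exact and_congr hax hxb

theorem preimage_ap_inv_Ioo {g : PermR} (hg : StrictMono (ap g)) (a b : ℝ) :
    ap g⁻¹ ⁻¹' Ioo a b = Ioo (ap g a) (ap g b) := by
  ext x
  have hax : a < ap g⁻¹ x ↔ ap g a < x := by simpa using (hg.lt_iff_lt (b := ap g⁻¹ x)).symm
  have hxb : ap g⁻¹ x < b ↔ x < ap g b := by simpa using (hg.lt_iff_lt (a := ap g⁻¹ x)).symm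
  exact and_congr hax hxb

theorem ap_commutator_eq_self_iff {f g : PermR} {x : ℝ} :
    ap ⁅f, g⁆ x = x ↔ ap g (ap f x) = ap f (ap g x) := by
  simp only [commutatorElement_def, ap_mul, ap_inv_eq_iff]

end Action

section Component

/-- The interval `(a, b)` is a connected component of the open set `S ⊆ ℝ`; for `S = Supp g` and
`S = GSupp G` this unfolds to `IsOrbital g a b` and `IsGroupOrbital G a b`. -/
def IsComponentIoo (S : Set ℝ) (a b : ℝ) : Prop :=
  a < b ∧ Ioo a b ⊆ S ∧ a ∉ S ∧ b ∉ S

variable {S : Set ℝ} {a b p x u v : ℝ}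

theorem IsComponentIoo.le_or_le_of_notMem (h : IsComponentIoo S a b) (hx : x ∉ S) :
    x ≤ a ∨ b ≤ x := by
  by_contra! hab
  exact hx (h.2.1 hab)

theorem IsComponentIoo.eq_of_lt_of_lt (h : IsComponentIoo S a b) (h' : IsComponentIoo S u v)
    (hav : a < v) (hub : u < b) : a = u ∧ b = v := by
  have hu := h.le_or_le_of_notMem h'.2.2.1
  have hv := h.le_or_le_of_notMem h'.2.2.2
  have ha := h'.le_or_le_of_notMem h.2.2.1
  have hb := h'.le_or_le_of_notMem h.2.2.2
  grind

theorem exists_isComponentIoo (hS : IsOpen S) (hb : Bornology.IsBounded S) (hx : x ∈ S) :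
    ∃ a b, a < x ∧ x < b ∧ IsComponentIoo S a b := by
  obtain ⟨R, hR⟩ := hb.subset_closedBall x
  rw [Real.closedBall_eq_Icc] at hR
  have hne : x ∈ Icc (x - R) (x + R) := hR hx
  have hgap : ∀ y ∉ Icc (x - R) (x + R), y ∈ Sᶜ := fun y hy hyS => hy (hR hyS)
  obtain ⟨a, ⟨haS, hax⟩, ha⟩ : ∃ a, IsGreatest (Sᶜ ∩ Iic x) a :=
    ⟨_, (hS.isClosed_compl.inter isClosed_Iic).isGreatest_csSup
      ⟨x - R - 1, hgap _ (by grind), by grind⟩ (bddAbove_Iic.mono inter_subset_right)⟩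
  obtain ⟨b, ⟨hbS, hxb⟩, hb⟩ : ∃ b, IsLeast (Sᶜ ∩ Ici x) b :=
    ⟨_, (hS.isClosed_compl.inter isClosed_Ici).isLeast_csInf
      ⟨x + R + 1, hgap _ (by grind), by grind⟩ (bddBelow_Ici.mono inter_subset_right)⟩
  have hax' : a < x := hax.lt_of_ne fun h => haS (h ▸ hx)
  have hxb' : x < b := hxb.lt_of_ne fun h => hbS (h ▸ hx)
  refine ⟨a, b, hax', hxb', hax'.trans hxb', fun t ht => ?_, haS, hbS⟩
  by_contra htS
  rcases le_total t x with htx | hxt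
  · exact (ha ⟨htS, htx⟩).not_gt ht.1
  · exact (hb ⟨htS, hxt⟩).not_gt ht.2

theorem exists_isComponentIoo_of_mem_nhdsGT (hS : IsOpen S) (hb : Bornology.IsBounded S)
    (hp : p ∉ S) (hSp : S ∈ 𝓝[>] p) : ∃ v, IsComponentIoo S p v := by
  obtain ⟨q, hpq, hq⟩ := mem_nhdsGT_iff_exists_Ioo_subset.1 hSp
  obtain ⟨x, hx⟩ := nonempty_Ioo.2 (mem_Ioi.1 hpq)
  obtain ⟨u, v, hux, hxv, huv⟩ := exists_isComponentIoo hS hb (hq hx)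
  have hup : u ≤ p := not_lt.1 fun h => huv.2.2.1 (hq ⟨h, hux.trans hx.2⟩)
  have hpu : p ≤ u := (huv.le_or_le_of_notMem hp).resolve_right (hx.1.trans hxv).not_ge
  exact ⟨v, le_antisymm hup hpu ▸ huv⟩

theorem exists_isComponentIoo_of_mem_nhdsLT (hS : IsOpen S) (hb : Bornology.IsBounded S)
    (hp : p ∉ S) (hSp : S ∈ 𝓝[<] p) : ∃ u, IsComponentIoo S u p := by
  obtain ⟨q, hqp, hq⟩ := mem_nhdsLT_iff_exists_Ioo_subset.1 hSp
  obtain ⟨x, hx⟩ := nonempty_Ioo.2 (mem_Iio.1 hqp)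
  obtain ⟨u, v, hux, hxv, huv⟩ := exists_isComponentIoo hS hb (hq hx)
  have hpv : p ≤ v := not_lt.1 fun h => huv.2.2.2 (hq ⟨hx.1.trans hxv, h⟩)
  have hvp : v ≤ p := (huv.le_or_le_of_notMem hp).resolve_left (hux.trans hx.2).not_ge
  exact ⟨u, le_antisymm hpv hvp ▸ huv⟩

end Component

section Orbital

variable {f g : PermR} {K : Subgroup PermR} {a b u v : ℝ}

theorem IsOrbital.isComponentIoo (h : IsOrbital f a b) : IsComponentIoo (Supp f) a b := h

theorem IsGroupOrbital.isComponentIoo (h : IsGroupOrbital K a b) :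
    IsComponentIoo (GSupp K) a b := h

theorem IsOrbital.ap_left (h : IsOrbital f a b) : ap f a = a := notMem_supp.1 h.2.2.1

theorem IsOrbital.ap_right (h : IsOrbital f a b) : ap f b = b := notMem_supp.1 h.2.2.2

theorem IsOrbital.le_or_le_of_ap_eq (h : IsOrbital f a b) {x : ℝ} (hx : ap f x = x) :
    x ≤ a ∨ b ≤ x :=
  h.isComponentIoo.le_or_le_of_notMem (notMem_supp.2 hx)

theorem IsOrbital.congr (h : IsOrbital f a b) (hf : StrictMono (ap f)) (hg : StrictMono (ap g))
    (hfg : EqOn (ap g) (ap f) (Ioo a b)) : IsOrbital g a b := by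
  have heq : EqOn (ap g) (ap f) (Icc a b) :=
    closure_Ioo h.1.ne ▸ hfg.closure (continuous_ap hg) (continuous_ap hf)
  refine ⟨h.1, fun x hx => ?_, notMem_supp.2 ?_, notMem_supp.2 ?_⟩
  · rw [Supp, mem_ofPred_eq, hfg hx]
    exact h.2.1 hx
  · rw [heq (left_mem_Icc.2 h.1.le), h.ap_left]
  · rw [heq (right_mem_Icc.2 h.1.le), h.ap_right]

theorem supp_conj (f h : PermR) : Supp (h⁻¹ * f * h) = ap h⁻¹ ⁻¹' Supp f := by
  ext x
  simp only [Supp, mem_ofPred_eq, mem_preimage, ap_mul, ne_eq, ← ap_inv_eq_iff (g := h⁻¹), inv_inv]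

theorem IsComponentIoo.preimage_ap_inv {S : Set ℝ} {h : PermR} (hh : StrictMono (ap h))
    (hab : IsComponentIoo S a b) : IsComponentIoo (ap h⁻¹ ⁻¹' S) (ap h a) (ap h b) := by
  refine ⟨hh hab.1, ?_, by simpa using hab.2.2.1, by simpa using hab.2.2.2⟩
  rw [← preimage_ap_inv_Ioo hh]
  exact preimage_mono hab.2.1

theorem IsOrbital.conj {h : PermR} (hh : StrictMono (ap h)) (hf : IsOrbital f a b) :
    IsOrbital (h⁻¹ * f * h) (ap h a) (ap h b) := by
  have := hf.isComponentIoo.preimage_ap_inv hh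
  rwa [← supp_conj] at this

theorem preimage_ap_inv_gSupp {h : PermR} (hh : h ∈ Subgroup.normalizer (K : Set PermR)) :
    ap h⁻¹ ⁻¹' GSupp K = GSupp K := by
  ext x
  rw [mem_preimage, mem_gSupp, mem_gSupp]
  have hmoved (k : PermR) : ap (h⁻¹ * k * h) x ≠ x ↔ ap k (ap h⁻¹ x) ≠ ap h⁻¹ x :=
    (Set.ext_iff.1 (supp_conj k h) x)
  constructor
  · rintro ⟨k, hk, hkx⟩
    exact ⟨_, (Subgroup.mem_normalizer_iff''.1 hh k).1 hk, (hmoved k).2 hkx⟩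
  · rintro ⟨k, hk, hkx⟩
    refine ⟨_, (Subgroup.mem_normalizer_iff.1 hh k).1 hk, (hmoved _).1 ?_⟩
    simpa [mul_assoc] using hkx

theorem IsGroupOrbital.ap_eq_of_mem_normalizer (hK : IsGroupOrbital K u v) {h : PermR}
    (hh : StrictMono (ap h)) (hhK : h ∈ Subgroup.normalizer (K : Set PermR)) {r : ℝ}
    (hr : r ∈ Icc u v) (hhr : ap h r = r) : ap h u = u ∧ ap h v = v := by
  have himage : IsComponentIoo (GSupp K) (ap h u) (ap h v) :=
    preimage_ap_inv_gSupp hhK ▸ hK.isComponentIoo.preimage_ap_inv hh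
  have hur : ap h u ≤ r := hhr ▸ hh.monotone hr.1
  have hrv : r ≤ ap h v := hhr ▸ hh.monotone hr.2
  refine himage.eq_of_lt_of_lt hK.isComponentIoo ?_ ?_
  · rcases hr.2.lt_or_eq with hrv | rfl
    · exact hur.trans_lt hrv
    · exact (hh hK.1).trans_eq hhr
  · rcases hr.1.lt_or_eq with hur | rfl
    · exact hur.trans_le hrv
    · exact hhr.symm.trans_lt (hh hK.1)

end Orbital

section Germ

/-- The elements whose germ along `l` is the identity. For `l = pure x` this is the stabiliser of
`x`; membership for `l = 𝓝[>] u ⊔ 𝓝[<] v` says that the support stays away from the ends of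
`(u, v)` inside `(u, v)`. -/
def germFixer (l : Filter ℝ) : Subgroup PermR where
  carrier := {f | ∀ᶠ x in l, ap f x = x}
  one_mem' := Eventually.of_forall ap_one
  mul_mem' hf hg := by
    filter_upwards [hf, hg] with x hfx hgx
    rw [ap_mul, hfx, hgx]
  inv_mem' hf := hf.mono fun _ => ap_inv_eq_self_iff.2

theorem mem_germFixer_pure {f : PermR} {x : ℝ} : f ∈ germFixer (pure x) ↔ ap f x = x :=
  eventually_pure

theorem mem_germFixer_sup {l l' : Filter ℝ} {f : PermR} :
    f ∈ germFixer (l ⊔ l') ↔ f ∈ germFixer l ∧ f ∈ germFixer l' :=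
  eventually_sup

theorem gSupp_closure (S : Set PermR) : GSupp (Subgroup.closure S) = ⋃ g ∈ S, Supp g := by
  refine Subset.antisymm (fun x hx => ?_) (biUnion_subset_biUnion_left Subgroup.subset_closure)
  contrapose! hx
  have hfix : Subgroup.closure S ≤ germFixer (pure x) := (Subgroup.closure_le _).2 fun g hg =>
    mem_germFixer_pure.2 (notMem_supp.1 fun hgx => hx (mem_biUnion hg hgx))
  exact notMem_gSupp.2 fun g hg => mem_germFixer_pure.1 (hfix hg)

/-- Along `l`, the map `f` is linear in the coordinate centred at `p`. -/
def IsLinearAlong (f : PermR) (p : ℝ) (l : Filter ℝ) : Prop :=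
  ∃ m : ℝ, ∀ᶠ x in l, ap f x - p = m * (x - p)

/-- The homeomorphisms for which the argument works: compactly supported, increasing, and linear on
each side of every fixed point. Away from its fixed points such a map is an arbitrary
homeomorphism. -/
structure HasLinearGerms (f : PermR) : Prop where
  strictMono : StrictMono (ap f)
  isBounded_supp : Bornology.IsBounded (Supp f)
  nhdsGT {p : ℝ} (hp : ap f p = p) : IsLinearAlong f p (𝓝[>] p)
  nhdsLT {p : ℝ} (hp : ap f p = p) : IsLinearAlong f p (𝓝[<] p)

variable {f g : PermR} {G : Subgroup PermR} {p u v : ℝ} {l : Filter ℝ}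

theorem IsLinearAlong.commutator_mem_germFixer (hf : IsLinearAlong f p l)
    (hg : IsLinearAlong g p l) (hfl : Tendsto (ap f) l l) (hgl : Tendsto (ap g) l l) :
    ⁅f, g⁆ ∈ germFixer l := by
  obtain ⟨m, hm⟩ := hf
  obtain ⟨n, hn⟩ := hg
  filter_upwards [hm, hn, hfl.eventually hn, hgl.eventually hm] with x hfx hgx hgfx hfgx
  exact ap_commutator_eq_self_iff.2 (by linear_combination hgfx - hfgx + n * hfx - m * hgx)

theorem IsLinearAlong.eventually_eq_or_eventually_ne (hf : IsLinearAlong f p l)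
    (hl : l ≤ 𝓝[≠] p) : (∀ᶠ x in l, ap f x = x) ∨ ∀ᶠ x in l, ap f x ≠ x := by
  obtain ⟨m, hm⟩ := hf
  rcases eq_or_ne m 1 with rfl | hm1
  · exact .inl (hm.mono fun x hx => by linarith)
  · right
    filter_upwards [hm, hl self_mem_nhdsWithin] with x hx hxp hfx
    rw [hfx, eq_comm, mul_eq_right₀ (sub_ne_zero.2 hxp)] at hx
    exact hm1 hx

theorem tendsto_ap_nhdsGT (hf : StrictMono (ap f)) (hp : ap f p = p) :
    Tendsto (ap f) (𝓝[>] p) (𝓝[>] p) := by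
  have h := ((continuous_ap hf).continuousWithinAt (x := p)).tendsto_nhdsWithin
    (hf.mapsTo_Ioi (a := p))
  rwa [hp] at h

theorem tendsto_ap_nhdsLT (hf : StrictMono (ap f)) (hp : ap f p = p) :
    Tendsto (ap f) (𝓝[<] p) (𝓝[<] p) := by
  have h := ((continuous_ap hf).continuousWithinAt (x := p)).tendsto_nhdsWithin
    (hf.mapsTo_Iio (b := p))
  rwa [hp] at h

theorem commutator_le_germFixer (hG : ∀ g ∈ G, HasLinearGerms g) (hu : u ∉ GSupp G)
    (hv : v ∉ GSupp G) : ⁅G, G⁆ ≤ germFixer (𝓝[>] u ⊔ 𝓝[<] v) := by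
  rw [notMem_gSupp] at hu hv
  refine Subgroup.commutator_le.2 fun f hf g hg => mem_germFixer_sup.2 ⟨?_, ?_⟩
  · exact ((hG f hf).nhdsGT (hu f hf)).commutator_mem_germFixer ((hG g hg).nhdsGT (hu g hg))
      (tendsto_ap_nhdsGT (hG f hf).strictMono (hu f hf))
      (tendsto_ap_nhdsGT (hG g hg).strictMono (hu g hg))
  · exact ((hG f hf).nhdsLT (hv f hf)).commutator_mem_germFixer ((hG g hg).nhdsLT (hv g hg))
      (tendsto_ap_nhdsLT (hG f hf).strictMono (hv f hf))
      (tendsto_ap_nhdsLT (hG g hg).strictMono (hv g hg))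

theorem HasLinearGerms.mem_germFixer_nhdsGT_or_isOrbital (hf : HasLinearGerms f)
    (hp : ap f p = p) : f ∈ germFixer (𝓝[>] p) ∨ ∃ v, IsOrbital f p v :=
  ((hf.nhdsGT hp).eventually_eq_or_eventually_ne
    (nhdsWithin_mono p fun _ hx => hx.ne')).imp_right
    (exists_isComponentIoo_of_mem_nhdsGT (isOpen_supp hf.strictMono) hf.isBounded_supp
      (notMem_supp.2 hp))

theorem HasLinearGerms.mem_germFixer_nhdsLT_or_isOrbital (hf : HasLinearGerms f)
    (hp : ap f p = p) : f ∈ germFixer (𝓝[<] p) ∨ ∃ u, IsOrbital f u p :=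
  ((hf.nhdsLT hp).eventually_eq_or_eventually_ne
    (nhdsWithin_mono p fun _ hx => hx.ne)).imp_right
    (exists_isComponentIoo_of_mem_nhdsLT (isOpen_supp hf.strictMono) hf.isBounded_supp
      (notMem_supp.2 hp))

end Germ

section Displacement

variable {K : Subgroup PermR} {p q u v x : ℝ}

theorem exists_mem_lt_ap (hK : ∀ k ∈ K, StrictMono (ap k)) (hx : x ∈ GSupp K) :
    ∃ k ∈ K, x < ap k x := by
  obtain ⟨k, hk, hkx⟩ := mem_gSupp.1 hx
  rcases hkx.lt_or_gt with hlt | hgt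
  · exact ⟨k⁻¹, K.inv_mem hk, by simpa using strictMono_ap_inv (hK k hk) hlt⟩
  · exact ⟨k, hk, hgt⟩

theorem exists_mem_ap_lt (hK : ∀ k ∈ K, StrictMono (ap k)) (hx : x ∈ GSupp K) :
    ∃ k ∈ K, ap k x < x := by
  obtain ⟨k, hk, hlt⟩ := exists_mem_lt_ap hK hx
  exact ⟨k⁻¹, K.inv_mem hk, by simpa using strictMono_ap_inv (hK k hk) hlt⟩

theorem IsGroupOrbital.exists_mem_lt_ap (h : IsGroupOrbital K u v)
    (hK : ∀ k ∈ K, StrictMono (ap k)) (hp : u < p) (hq : q < v) : ∃ k ∈ K, q < ap k p := by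
  by_contra! hle
  let orbit : Set ℝ := {y | ∃ k ∈ K, ap k p = y}
  have hbdd : BddAbove orbit := ⟨q, by rintro _ ⟨k, hk, rfl⟩; exact hle k hk⟩
  have hp_mem : p ∈ orbit := ⟨1, K.one_mem, rfl⟩
  have hs : sSup orbit ∈ Ioo u v :=
    ⟨hp.trans_le (le_csSup hbdd hp_mem), (csSup_le ⟨p, hp_mem⟩
      (by rintro _ ⟨k, hk, rfl⟩; exact hle k hk)).trans_lt hq⟩
  obtain ⟨k, hk, hlt⟩ := PLPaper.exists_mem_lt_ap hK (h.2.1 hs)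
  have hlt' : ap k⁻¹ (sSup orbit) < sSup orbit := by
    simpa using strictMono_ap_inv (hK k hk) hlt
  obtain ⟨_, ⟨g, hg, rfl⟩, hgs⟩ := exists_lt_of_lt_csSup ⟨p, hp_mem⟩ hlt'
  have hgt : sSup orbit < ap (g * k) p := by simpa using hK k hk hgs
  exact hgt.not_ge (le_csSup hbdd ⟨g * k, K.mul_mem hg hk, rfl⟩)

/-- Inside `(u, v)` the support of `f` is relatively compact. If `k ∈ K` displaces it from itself,
then `f` and its conjugate by `k` have disjoint supports there. -/
theorem IsGroupOrbital.exists_ap_commutator_eq (h : IsGroupOrbital K u v)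
    (hK : ∀ k ∈ K, StrictMono (ap k)) {f : PermR} (hf : StrictMono (ap f)) (hfu : ap f u = u)
    (hfv : ap f v = v) (hgerm : f ∈ germFixer (𝓝[>] u ⊔ 𝓝[<] v)) :
    ∃ k ∈ K, ∀ x ∈ Ioo u v, ap f x ≠ x → ap ⁅f, k⁆ x = ap f x := by
  obtain ⟨m, hum, hmv⟩ := exists_between h.1
  obtain ⟨hgermu, hgermv⟩ := mem_germFixer_sup.1 hgerm
  obtain ⟨p, hp, hpf⟩ := (mem_nhdsGT_iff_exists_mem_Ioc_Ioo_subset hum).1 hgermu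
  obtain ⟨q, hq, hqf⟩ := (mem_nhdsLT_iff_exists_mem_Ico_Ioo_subset hmv).1 hgermv
  obtain ⟨k, hk, hqk⟩ := h.exists_mem_lt_ap hK hp.1 hq.2
  refine ⟨k, hk, fun x hx hfx => ?_⟩
  have hfx_mem : ap f x ∈ Ioo u v := (ap_mem_Ioo_iff hf hfu hfv).2 hx
  have hp_le : p ≤ ap f x :=
    not_lt.1 fun hlt => hfx (ap_injective f (hpf ⟨hfx_mem.1, hlt⟩))
  have hkfx_mem : ap k (ap f x) ∈ Ioo u v :=
    (ap_mem_Ioo_iff (hK k hk) (notMem_gSupp.1 h.2.2.1 k hk) (notMem_gSupp.1 h.2.2.2 k hk)).2 hfx_mem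
  have hfix : ap f (ap k (ap f x)) = ap k (ap f x) :=
    hqf ⟨hqk.trans_le ((hK k hk).monotone hp_le), hkfx_mem.2⟩
  simp [commutatorElement_def, ap_inv_eq_self_iff.2 hfix]

theorem IsGroupOrbital.commutator (h : IsGroupOrbital K u v)
    (hK : ∀ k ∈ K, StrictMono (ap k)) (hgerm : K ≤ germFixer (𝓝[>] u ⊔ 𝓝[<] v)) :
    IsGroupOrbital ⁅K, K⁆ u v := by
  have hle : GSupp ⁅K, K⁆ ⊆ GSupp K := gSupp_mono (Subgroup.commutator_le_self K)
  refine ⟨h.1, fun x hx => ?_, fun hu => h.2.2.1 (hle hu), fun hv => h.2.2.2 (hle hv)⟩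
  obtain ⟨f, hf, hfx⟩ := mem_gSupp.1 (h.2.1 hx)
  obtain ⟨k, hk, hkf⟩ := h.exists_ap_commutator_eq hK (hK f hf) (notMem_gSupp.1 h.2.2.1 f hf)
    (notMem_gSupp.1 h.2.2.2 f hf) (hgerm hf)
  exact mem_gSupp.2 ⟨⁅f, k⁆, Subgroup.commutator_mem_commutator hf hk, by rwa [hkf x hx hfx]⟩

theorem IsGroupOrbital.derivedSubgroup (h : IsGroupOrbital K u v)
    (hK : ∀ k ∈ K, StrictMono (ap k)) (hgerm : K ≤ germFixer (𝓝[>] u ⊔ 𝓝[<] v)) (n : ℕ) :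
    IsGroupOrbital (derivedSubgroup K n) u v := by
  induction n with
  | zero => exact h
  | succ n ih =>
    have hle := derivedSubgroup_le K n
    exact ih.commutator (fun k hk => hK k (hle hk)) (hle.trans hgerm)

theorem IsGroupOrbital.ne_bot (h : IsGroupOrbital K u v) : K ≠ ⊥ := by
  rintro rfl
  obtain ⟨x, hx⟩ := nonempty_Ioo.2 h.1
  simpa [mem_gSupp] using h.2.1 hx

end Displacement

section BadOverlap

variable {G H : Subgroup PermR} {f g : PermR} {a b c d p r : ℝ}

theorem admitsBadOverlap_iff : AdmitsBadOverlap G ↔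
    ∃ f ∈ G, ∃ g ∈ G, ∃ a b c d : ℝ, IsOrbital f a b ∧ IsOrbital g c d ∧ c < b ∧ a < d ∧
      ¬(a = c ∧ b = d) ∧ ¬(c < a ∧ b < d) ∧ ¬(a < c ∧ d < b) := by
  refine exists_congr fun f => and_congr_right fun _ => exists_congr fun g =>
    and_congr_right fun _ => exists_congr fun a => exists_congr fun b => exists_congr fun c =>
    exists_congr fun d => and_congr_right fun hab => and_congr_right fun hcd => ?_
  have hne : Ioo a b = Ioo c d ↔ a = c ∧ b = d := by
    rw [Subset.antisymm_iff, Ioo_subset_Ioo_iff hab.1, Ioo_subset_Ioo_iff hcd.1]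
    grind
  rw [Ioo_inter_Ioo, nonempty_Ioo, max_lt_iff, lt_min_iff, lt_min_iff, Ne, hne,
    Icc_subset_Ioo_iff hab.1.le, Icc_subset_Ioo_iff hcd.1.le]
  have := hab.1
  have := hcd.1
  tauto

theorem AdmitsBadOverlap.mono (hHG : H ≤ G) (hH : AdmitsBadOverlap H) : AdmitsBadOverlap G := by
  obtain ⟨f, hf, g, hg, hover⟩ := hH
  exact ⟨f, hHG hf, g, hHG hg, hover⟩

/-- The component of the support of `⁅⟨f, g⟩, ⟨f, g⟩⁆` containing `p` has endpoints fixed by both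
`f` and `g`, so the germs there commute and `IsGroupOrbital.commutator` keeps that component alive
in every further derived subgroup. -/
theorem IsOrbital.derivedSubgroup_ne_bot (hG : ∀ g ∈ G, HasLinearGerms g) (hf : f ∈ G)
    (hg : g ∈ G) (hab : IsOrbital f a b) (hp : p ∈ Icc a b) (hfp : ap f p = p)
    (hgp : ap g p ∈ Ioo a b) (hr : r ∈ Icc a b) (hgr : ap g r = r) (n : ℕ) :
    derivedSubgroup G n ≠ ⊥ := by
  let H : Subgroup PermR := Subgroup.closure {f, g}
  have hfH : f ∈ H := Subgroup.subset_closure (by simp)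
  have hgH : g ∈ H := Subgroup.subset_closure (by simp)
  have hHG : H ≤ G := (Subgroup.closure_le G).2 (by simp [insert_subset_iff, hf, hg])
  have hDH : ⁅H, H⁆ ≤ H := Subgroup.commutator_le_self H
  have hDmono : ∀ k ∈ ⁅H, H⁆, StrictMono (ap k) := fun k hk => (hG k (hHG (hDH hk))).strictMono
  have hsupp : GSupp H = Supp f ∪ Supp g := by rw [gSupp_closure, biUnion_pair]
  have hbdd : Bornology.IsBounded (GSupp ⁅H, H⁆) :=
    ((hG f hf).isBounded_supp.union (hG g hg).isBounded_supp).subset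
      ((gSupp_mono hDH).trans hsupp.subset)
  have hpD : p ∈ GSupp ⁅H, H⁆ := by
    refine mem_gSupp.2 ⟨⁅f, g⁆, Subgroup.commutator_mem_commutator hfH hgH, fun h => ?_⟩
    rw [ap_commutator_eq_self_iff, hfp] at h
    exact hab.2.1 hgp h.symm
  obtain ⟨u, v, hup, hpv, huv : IsGroupOrbital ⁅H, H⁆ u v⟩ :=
    exists_isComponentIoo (isOpen_gSupp hDmono) hbdd hpD
  have hnorm : H ≤ Subgroup.normalizer (⁅H, H⁆ : Subgroup PermR) :=
    Subgroup.normalizer_commutator_ge_left ..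
  obtain ⟨hfu, hfv⟩ := huv.ap_eq_of_mem_normalizer (hG f hf).strictMono (hnorm hfH)
    ⟨hup.le, hpv.le⟩ hfp
  have hua : u ≤ a := (hab.le_or_le_of_ap_eq hfu).resolve_right (hup.trans_le hp.2).not_ge
  have hbv : b ≤ v := (hab.le_or_le_of_ap_eq hfv).resolve_left (hp.1.trans_lt hpv).not_ge
  obtain ⟨hgu, hgv⟩ := huv.ap_eq_of_mem_normalizer (hG g hg).strictMono (hnorm hgH)
    ⟨hua.trans hr.1, hr.2.trans hbv⟩ hgr
  have hgerm : ⁅H, H⁆ ≤ germFixer (𝓝[>] u ⊔ 𝓝[<] v) :=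
    commutator_le_germFixer (fun k hk => hG k (hHG hk)) (by simp [hsupp, Supp, hfu, hgu])
      (by simp [hsupp, Supp, hfv, hgv])
  intro hbot
  exact (huv.derivedSubgroup hDmono hgerm n).ne_bot
    (le_bot_iff.1 (hbot ▸ derivedSubgroup_mono (hDH.trans hHG) n))

theorem IsOrbital.derivedSubgroup_ne_bot_of_le_of_lt (hG : ∀ g ∈ G, HasLinearGerms g) (hf : f ∈ G)
    (hg : g ∈ G) (hab : IsOrbital f a b) (hcd : IsOrbital g c d) (hac : a ≤ c) (hcb : c < b)
    (hbd : b < d) (n : ℕ) : derivedSubgroup G n ≠ ⊥ := by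
  have hb : b ∈ GSupp (G ⊓ germFixer (pure c)) :=
    mem_gSupp.2 ⟨g, ⟨hg, mem_germFixer_pure.2 hcd.ap_left⟩, hcd.2.1 ⟨hcb, hbd⟩⟩
  obtain ⟨k, ⟨hk, hkc⟩, hkb⟩ := exists_mem_ap_lt (K := G ⊓ germFixer (pure c))
    (fun k hk => (hG k hk.1).strictMono) hb
  have hc_lt : c < ap k b := by simpa [mem_germFixer_pure.1 hkc] using (hG k hk).strictMono hcb
  exact hab.derivedSubgroup_ne_bot hG hf hk ⟨hab.1.le, le_rfl⟩ hab.ap_right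
    ⟨hac.trans_lt hc_lt, hkb⟩ ⟨hac, hcb.le⟩ (mem_germFixer_pure.1 hkc) n

theorem IsOrbital.derivedSubgroup_ne_bot_of_lt_of_le (hG : ∀ g ∈ G, HasLinearGerms g) (hf : f ∈ G)
    (hg : g ∈ G) (hab : IsOrbital f a b) (hcd : IsOrbital g c d) (hca : c < a) (had : a < d)
    (hdb : d ≤ b) (n : ℕ) : derivedSubgroup G n ≠ ⊥ := by
  have ha : a ∈ GSupp (G ⊓ germFixer (pure d)) :=
    mem_gSupp.2 ⟨g, ⟨hg, mem_germFixer_pure.2 hcd.ap_right⟩, hcd.2.1 ⟨hca, had⟩⟩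
  obtain ⟨k, ⟨hk, hkd⟩, hka⟩ := exists_mem_lt_ap (K := G ⊓ germFixer (pure d))
    (fun k hk => (hG k hk.1).strictMono) ha
  have hlt_d : ap k a < d := by simpa [mem_germFixer_pure.1 hkd] using (hG k hk).strictMono had
  exact hab.derivedSubgroup_ne_bot hG hf hk ⟨le_rfl, hab.1.le⟩ hab.ap_left
    ⟨hka, hlt_d.trans_le hdb⟩ ⟨had.le, hdb⟩ (mem_germFixer_pure.1 hkd) n

theorem derivedSubgroup_ne_bot_of_admitsBadOverlap (hG : ∀ g ∈ G, HasLinearGerms g)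
    (h : AdmitsBadOverlap G) (n : ℕ) : derivedSubgroup G n ≠ ⊥ := by
  obtain ⟨f, hf, g, hg, a, b, c, d, hab, hcd, hcb, had, hne, hin, hout⟩ := admitsBadOverlap_iff.1 h
  rcases lt_trichotomy b d with hbd | hbd | hdb
  · exact hab.derivedSubgroup_ne_bot_of_le_of_lt hG hf hg hcd
      (not_lt.1 fun hca => hin ⟨hca, hbd⟩) hcb hbd n
  · rcases lt_trichotomy a c with hac | hac | hca
    · exact hcd.derivedSubgroup_ne_bot_of_lt_of_le hG hg hf hab hac hcb hbd.le n
    · exact absurd ⟨hac, hbd⟩ hne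
    · exact hab.derivedSubgroup_ne_bot_of_lt_of_le hG hf hg hcd hca had hbd.ge n
  · exact hcd.derivedSubgroup_ne_bot_of_le_of_lt hG hg hf hab
      (not_lt.1 fun hac => hout ⟨hac, hdb⟩) had hdb n

end BadOverlap

section Restriction

/-- `x` agrees with `f` on `s` and is the identity elsewhere. Bijectivity of `x` forces `s` to be
invariant under `f`. -/
def IsRestr (x f : PermR) (s : Set ℝ) : Prop :=
  (∀ r ∈ s, ap x r = ap f r) ∧ ∀ r ∉ s, ap x r = r

variable {f g x y z : PermR} {s : Set ℝ} {a b r : ℝ}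

theorem IsOneBumpFactor.isOrbital (h : IsOneBumpFactor x f a b) : IsOrbital f a b := h.1

theorem IsOneBumpFactor.isRestr (h : IsOneBumpFactor x f a b) : IsRestr x f (Ioo a b) := h.2

theorem IsRestr.supp_subset (h : IsRestr x f s) : Supp x ⊆ s :=
  fun r hr => by_contra fun hrs => hr (h.2 r hrs)

theorem IsRestr.ap_mem_iff (h : IsRestr x f s) : ap x r ∈ s ↔ r ∈ s := by
  refine ⟨fun hr => ?_, fun hr => ?_⟩ <;> by_contra hrs
  · exact hrs (h.2 r hrs ▸ hr)
  · exact hrs ((ap_injective x (h.2 _ hrs)).symm ▸ hr)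

theorem IsRestr.mul (hx : IsRestr x f s) (hy : IsRestr y g s) : IsRestr (x * y) (f * g) s := by
  refine ⟨fun r hr => ?_, fun r hr => ?_⟩
  · rw [ap_mul, ap_mul, hy.1 _ (hx.ap_mem_iff.2 hr), hx.1 r hr]
  · rw [ap_mul, hx.2 r hr, hy.2 r hr]

theorem IsRestr.inv (hx : IsRestr x f s) : IsRestr x⁻¹ f⁻¹ s := by
  refine ⟨fun r hr => ?_, fun r hr => ap_inv_eq_self_iff.2 (hx.2 r hr)⟩
  have hr' : ap x⁻¹ r ∈ s := hx.ap_mem_iff.1 (by rwa [ap_ap_inv])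
  rw [eq_comm, ap_inv_eq_iff, ← hx.1 _ hr', ap_ap_inv]

theorem IsRestr.commutator (hx : IsRestr x f s) (hy : IsRestr y g s) :
    IsRestr ⁅x, y⁆ ⁅f, g⁆ s :=
  ((hx.mul hy).mul hx.inv).mul hy.inv

theorem IsRestr.conj (hx : IsRestr x f s) (g : PermR) :
    IsRestr (g⁻¹ * x * g) (g⁻¹ * f * g) (ap g⁻¹ ⁻¹' s) := by
  refine ⟨fun r hr => ?_, fun r hr => ?_⟩
  · simp only [ap_mul, hx.1 _ hr]
  · simp only [ap_mul, hx.2 _ hr, ap_ap_inv]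

theorem commute_of_disjoint_supp (h : Disjoint (Supp x) (Supp y)) : Commute x y := by
  refine MulOpposite.commute_unop.1 (Equiv.Perm.Disjoint.commute fun r => ?_)
  by_contra! hr
  exact disjoint_left.1 h hr.1 hr.2

theorem IsRestr.conj_eq (hy : IsRestr y g s) (hz : Supp z ⊆ s) :
    y * z * y⁻¹ = g * z * g⁻¹ := by
  have hfix : ∀ r ∈ s, ap (g⁻¹ * y) r = r := fun r hr => by
    rw [ap_mul, ← hy.inv.1 r hr, ap_ap_inv]
  have hcomm : Commute (g⁻¹ * y) z :=
    commute_of_disjoint_supp (disjoint_left.2 fun r hr hrz => hr (hfix r (hz hrz)))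
  calc y * z * y⁻¹ = g * (g⁻¹ * y * z) * y⁻¹ := by group
    _ = g * (z * (g⁻¹ * y)) * y⁻¹ := by rw [hcomm.eq]
    _ = g * z * g⁻¹ := by group

theorem exists_isRestr (hs : ∀ r, ap f r ∈ s ↔ r ∈ s) : ∃ x, IsRestr x f s := by
  classical
  exact ⟨.op (Equiv.Perm.ofSubtype (f.unop.subtypePerm hs)),
    fun r hr => Equiv.Perm.ofSubtype_apply_of_mem _ hr,
    fun r hr => Equiv.Perm.ofSubtype_apply_of_not_mem _ hr⟩

theorem IsOrbital.inv (h : IsOrbital f a b) : IsOrbital f⁻¹ a b := by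
  have hsupp : Supp f⁻¹ = Supp f := by
    ext x
    exact not_congr ap_inv_eq_self_iff
  rwa [IsOrbital, hsupp]

theorem IsOneBumpFactor.inv (h : IsOneBumpFactor x f a b) : IsOneBumpFactor x⁻¹ f⁻¹ a b :=
  ⟨h.isOrbital.inv, h.isRestr.inv⟩

theorem IsOneBumpFactor.conj (hg : StrictMono (ap g)) (h : IsOneBumpFactor x f a b) :
    IsOneBumpFactor (g⁻¹ * x * g) (g⁻¹ * f * g) (ap g a) (ap g b) := by
  have hrestr := h.isRestr.conj g
  rw [preimage_ap_inv_Ioo hg] at hrestr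
  exact ⟨h.isOrbital.conj hg, hrestr⟩

end Restriction

section FiniteOrbitals

variable {f x : PermR} {G : Subgroup PermR} {a b : ℝ}

/-- The orbitals of `f` that meet `s`, as pairs of endpoints. -/
def orbitalsMeeting (f : PermR) (s : Set ℝ) : Set (ℝ × ℝ) :=
  {e | IsOrbital f e.1 e.2 ∧ (Ioo e.1 e.2 ∩ s).Nonempty}

theorem orbitalsMeeting_mono {s t : Set ℝ} (h : s ⊆ t) :
    orbitalsMeeting f s ⊆ orbitalsMeeting f t :=
  fun _ he => ⟨he.1, he.2.mono (inter_subset_inter_right _ h)⟩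

theorem orbitalsMeeting_union (f : PermR) (s t : Set ℝ) :
    orbitalsMeeting f (s ∪ t) = orbitalsMeeting f s ∪ orbitalsMeeting f t := by
  ext e
  simp only [orbitalsMeeting, inter_union_distrib_left, union_nonempty, mem_ofPred_eq, mem_union,
    and_or_left]

theorem orbitalsMeeting_eq_empty {s : Set ℝ} (h : ∀ r ∈ s, ap f r = r) :
    orbitalsMeeting f s = ∅ := by
  refine eq_empty_of_forall_notMem fun e he => ?_
  obtain ⟨r, hre, hrs⟩ := he.2
  exact he.1.2.1 hre (h r hrs)

theorem IsOrbital.finite_orbitalsMeeting (h : IsOrbital f a b) :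
    (orbitalsMeeting f (Ioo a b)).Finite := by
  refine (finite_singleton (a, b)).subset fun e he => ?_
  obtain ⟨r, hre, hr⟩ := he.2
  exact Prod.ext_iff.2 (he.1.isComponentIoo.eq_of_lt_of_lt h (hre.1.trans hr.2) (hr.1.trans hre.2))

theorem HasLinearGerms.exists_mem_nhds_finite_orbitalsMeeting (hf : HasLinearGerms f) (p : ℝ) :
    ∃ s ∈ 𝓝 p, (orbitalsMeeting f s).Finite := by
  by_cases hp : ap f p = p
  · obtain ⟨l, hl, hlfin⟩ : ∃ s ∈ 𝓝[<] p, (orbitalsMeeting f s).Finite := by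
      rcases hf.mem_germFixer_nhdsLT_or_isOrbital hp with hfix | ⟨u, hu⟩
      · exact ⟨_, hfix, by simp [orbitalsMeeting_eq_empty]⟩
      · exact ⟨_, Ioo_mem_nhdsLT hu.1, hu.finite_orbitalsMeeting⟩
    obtain ⟨r, hr, hrfin⟩ : ∃ s ∈ 𝓝[>] p, (orbitalsMeeting f s).Finite := by
      rcases hf.mem_germFixer_nhdsGT_or_isOrbital hp with hfix | ⟨v, hv⟩
      · exact ⟨_, hfix, by simp [orbitalsMeeting_eq_empty]⟩
      · exact ⟨_, Ioo_mem_nhdsGT hv.1, hv.finite_orbitalsMeeting⟩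
    refine ⟨l ∪ r ∪ {p}, ?_, ?_⟩
    · rw [← nhdsNE_sup_pure, ← nhdsLT_sup_nhdsGT]
      exact union_mem_sup (union_mem_sup hl hr) (mem_singleton p)
    · rw [orbitalsMeeting_union, orbitalsMeeting_union,
        orbitalsMeeting_eq_empty (s := {p}) (by simpa using hp), union_empty]
      exact hlfin.union hrfin
  · obtain ⟨a, b, hap, hpb, hab⟩ :=
      exists_isComponentIoo (isOpen_supp hf.strictMono) hf.isBounded_supp hp
    exact ⟨_, Ioo_mem_nhds hap hpb, IsOrbital.finite_orbitalsMeeting hab⟩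

theorem HasLinearGerms.finite_orbitals (hf : HasLinearGerms f) :
    {e : ℝ × ℝ | IsOrbital f e.1 e.2}.Finite := by
  have hfin : (orbitalsMeeting f (closure (Supp f))).Finite := by
    refine hf.isBounded_supp.isCompact_closure.induction_on
      (by simp [orbitalsMeeting_eq_empty]) (fun s t hst ht => ht.subset (orbitalsMeeting_mono hst))
      (fun s t hs ht => orbitalsMeeting_union f s t ▸ hs.union ht) fun p _ => ?_
    obtain ⟨s, hs, hsfin⟩ := hf.exists_mem_nhds_finite_orbitalsMeeting p
    exact ⟨s, mem_nhdsWithin_of_mem_nhds hs, hsfin⟩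
  refine hfin.subset fun e he => ⟨he, ?_⟩
  rw [inter_eq_left.2 (he.2.1.trans subset_closure)]
  exact nonempty_Ioo.2 he.1

theorem IsOneBumpFactor.mem_splitGroup (hf : f ∈ G) (h : IsOneBumpFactor x f a b) :
    x ∈ SplitGroup G :=
  Subgroup.subset_closure ⟨f, hf, a, b, h⟩

theorem IsRestr.mem_splitGroup_of_biUnion (hf : f ∈ G) (hmono : StrictMono (ap f))
    (T : Finset (ℝ × ℝ)) (hT : ∀ e ∈ T, IsOrbital f e.1 e.2)
    (hx : IsRestr x f (⋃ e ∈ T, Ioo e.1 e.2)) : x ∈ SplitGroup G := by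
  induction T using Finset.induction_on generalizing x with
  | empty =>
    have hx1 : x = 1 := ap_ext fun r => hx.2 r (by simp)
    exact hx1 ▸ Subgroup.one_mem _
  | insert e T heT ih =>
    have he : IsOrbital f e.1 e.2 := hT e (Finset.mem_insert_self e T)
    have hT' : ∀ e' ∈ T, IsOrbital f e'.1 e'.2 := fun e' he' => hT e' (Finset.mem_insert_of_mem he')
    obtain ⟨z, hz⟩ := exists_isRestr fun r =>
      ap_mem_Ioo_iff (x := r) hmono he.ap_left he.ap_right
    have hdisj : ∀ r ∈ ⋃ e' ∈ T, Ioo e'.1 e'.2, r ∉ Ioo e.1 e.2 := by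
      intro r hr hre
      obtain ⟨e', he', hre'⟩ := mem_iUnion₂.1 hr
      have heq := he.isComponentIoo.eq_of_lt_of_lt (hT' e' he') (hre.1.trans hre'.2)
        (hre'.1.trans hre.2)
      exact heT (Prod.ext_iff.2 heq ▸ he')
    rw [Finset.set_biUnion_insert] at hx
    have hzx : IsRestr (z⁻¹ * x) f (⋃ e' ∈ T, Ioo e'.1 e'.2) := by
      refine ⟨fun r hr => ?_, fun r hr => ?_⟩
      · rw [ap_mul, hz.inv.2 r (hdisj r hr), hx.1 r (Or.inr hr)]
      · by_cases hre : r ∈ Ioo e.1 e.2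
        · have hzr := hz.inv.ap_mem_iff.2 hre
          rw [ap_mul, hx.1 _ (Or.inl hzr), ← hz.1 _ hzr, ap_ap_inv]
        · rw [ap_mul, hz.inv.2 r hre, hx.2 r (by simp [hre, hr])]
    have hzG : z ∈ SplitGroup G := IsOneBumpFactor.mem_splitGroup hf ⟨he, hz⟩
    simpa using Subgroup.mul_mem _ hzG (ih hT' hzx)

theorem IsRestr.mem_splitGroup (hf : f ∈ G) (hgerm : HasLinearGerms f) (ha : ap f a = a)
    (hb : ap f b = b) (hx : IsRestr x f (Ioo a b)) : x ∈ SplitGroup G := by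
  let T : Set (ℝ × ℝ) := {e | IsOrbital f e.1 e.2 ∧ a ≤ e.1 ∧ e.2 ≤ b}
  have hT : T.Finite := hgerm.finite_orbitals.subset fun e he => he.1
  refine IsRestr.mem_splitGroup_of_biUnion hf hgerm.strictMono hT.toFinset
    (fun e he => (hT.mem_toFinset.1 he).1) ⟨fun r hr => ?_, fun r hr => ?_⟩
  · simp only [Finite.mem_toFinset, mem_iUnion₂] at hr
    obtain ⟨e, ⟨-, hae, heb⟩, hre⟩ := hr
    exact hx.1 r (Ioo_subset_Ioo hae heb hre)
  · by_contra hxr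
    have hrab : r ∈ Ioo a b := hx.supp_subset hxr
    rw [hx.1 r hrab] at hxr
    obtain ⟨u, v, hur, hrv, huv : IsOrbital f u v⟩ :=
      exists_isComponentIoo (isOpen_supp hgerm.strictMono) hgerm.isBounded_supp hxr
    refine hr (mem_iUnion₂.2 ⟨(u, v), hT.mem_toFinset.2 ⟨huv, ?_, ?_⟩, hur, hrv⟩)
    · exact (huv.le_or_le_of_ap_eq ha).resolve_right (hrab.1.trans hrv).not_ge
    · exact (huv.le_or_le_of_ap_eq hb).resolve_left (hur.trans hrab.2).not_ge

end FiniteOrbitals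

section SplitGroup

variable {G N : Subgroup PermR} {f g w x y z : PermR} {a b c d : ℝ}

theorem splitGroup_bot : SplitGroup ⊥ = ⊥ := by
  refine (Subgroup.closure_eq_bot_iff).2 ?_
  rintro x ⟨f, rfl, a, b, hx⟩
  obtain ⟨r, hr⟩ := nonempty_Ioo.2 hx.isOrbital.1
  exact absurd (ap_one r) (hx.isOrbital.2.1 hr)

theorem le_normalizer_splitGroup (hG : ∀ g ∈ G, StrictMono (ap g))
    (hN : G ≤ Subgroup.normalizer (N : Set PermR)) :
    G ≤ Subgroup.normalizer (SplitGroup N : Set PermR) := by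
  refine Subgroup.le_normalizer_closure_iff.2 ?_
  rintro g hg x ⟨f, hf, a, b, hx⟩
  have hconj := hx.conj (hG g⁻¹ (G.inv_mem hg))
  rw [inv_inv] at hconj
  exact hconj.mem_splitGroup ((Subgroup.mem_normalizer_iff.1 (hN hg) f).1 hf)

theorem IsOrbital.disjoint_or_nested (hover : ¬AdmitsBadOverlap G) (hf : f ∈ G) (hg : g ∈ G)
    (hab : IsOrbital f a b) (hcd : IsOrbital g c d) :
    (b ≤ c ∨ d ≤ a) ∨ (a = c ∧ b = d) ∨ (c < a ∧ b < d) ∨ (a < c ∧ d < b) := by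
  by_contra! h
  exact hover (admitsBadOverlap_iff.2 ⟨f, hf, g, hg, a, b, c, d, hab, hcd, h.1.1, h.1.2,
    fun e => h.2.1 e.1 e.2, fun e => (h.2.2.1 e.1).not_gt e.2, fun e => (h.2.2.2 e.1).not_gt e.2⟩)

theorem IsOneBumpFactor.commute_of_le (hx : IsOneBumpFactor x f a b)
    (hy : IsOneBumpFactor y g c d) (h : b ≤ c ∨ d ≤ a) : Commute x y := by
  refine commute_of_disjoint_supp
    (Disjoint.mono hx.isRestr.supp_subset hy.isRestr.supp_subset (disjoint_left.2 ?_))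
  rintro r hr hr'
  rcases h with h | h
  · exact (hr.2.trans_le h).not_gt hr'.1
  · exact (hr'.2.trans_le h).not_gt hr.1

theorem IsOrbital.mem_germFixer_of_nested (hover : ¬AdmitsBadOverlap G) (hf : f ∈ G)
    (hfgerm : HasLinearGerms f) (hg : g ∈ G) (hab : IsOrbital f a b) (hcd : IsOrbital g c d)
    (hca : c < a) (hbd : b < d) :
    ap f c = c ∧ ap f d = d ∧ f ∈ germFixer (𝓝[>] c ⊔ 𝓝[<] d) := by
  have horb : ∀ u v, IsOrbital f u v → v ≤ c ∨ d ≤ u ∨ (c < u ∧ v < d) := by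
    intro u v huv
    have := huv.disjoint_or_nested hover hf hg hcd
    have := hab.isComponentIoo.eq_of_lt_of_lt huv.isComponentIoo
    have := hab.1
    grind
  have hfix : ∀ r, r = c ∨ r = d → ap f r = r := by
    intro r hr
    by_contra hne
    obtain ⟨u, v, hur, hrv, huv⟩ :=
      exists_isComponentIoo (isOpen_supp hfgerm.strictMono) hfgerm.isBounded_supp hne
    have := horb u v huv
    have := hcd.1
    grind
  have hc := hfix c (.inl rfl)
  have hd := hfix d (.inr rfl)
  refine ⟨hc, hd, mem_germFixer_sup.2 ⟨?_, ?_⟩⟩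
  · refine (hfgerm.mem_germFixer_nhdsGT_or_isOrbital hc).resolve_right ?_
    rintro ⟨v, hv⟩
    have := horb c v hv
    have := hv.1
    have := hcd.1
    grind
  · refine (hfgerm.mem_germFixer_nhdsLT_or_isOrbital hd).resolve_right ?_
    rintro ⟨u, hu⟩
    have := horb u d hu
    have := hu.1
    have := hcd.1
    grind

theorem IsOneBumpFactor.mem_splitGroup_commutator_of_nested (hG : ∀ g ∈ G, HasLinearGerms g)
    (hover : ¬AdmitsBadOverlap G) (hf : f ∈ G) (hg : g ∈ G) (hx : IsOneBumpFactor x f a b)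
    (hcd : IsOrbital g c d) (hca : c < a) (hbd : b < d) : x ∈ SplitGroup ⁅G, G⁆ := by
  have hab := hx.isOrbital
  obtain ⟨hfc, hfd, hgerm⟩ :=
    hab.mem_germFixer_of_nested hover hf (hG f hf) hg hcd hca hbd
  let K : Subgroup PermR := Subgroup.closure {g}
  have hKG : K ≤ G := (Subgroup.closure_le G).2 (singleton_subset_iff.2 hg)
  have hK : IsGroupOrbital K c d := by
    rwa [IsGroupOrbital, gSupp_closure, biUnion_singleton]
  obtain ⟨k, hk, hcomm⟩ := hK.exists_ap_commutator_eq
    (fun k hk => (hG k (hKG hk)).strictMono) (hG f hf).strictMono hfc hfd hgerm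
  have hmem : ⁅f, k⁆ ∈ ⁅G, G⁆ := Subgroup.commutator_mem_commutator hf (hKG hk)
  have hcommG : StrictMono (ap ⁅f, k⁆) :=
    (hG _ (Subgroup.commutator_le_self G hmem)).strictMono
  have heq : EqOn (ap ⁅f, k⁆) (ap f) (Ioo a b) := fun r hr =>
    hcomm r ⟨hca.trans hr.1, hr.2.trans hbd⟩ (hab.2.1 hr)
  exact IsOneBumpFactor.mem_splitGroup hmem
    ⟨hab.congr (hG f hf).strictMono hcommG heq, fun r hr => (hx.isRestr.1 r hr).trans (heq hr).symm,
      hx.isRestr.2⟩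

theorem IsOneBumpFactor.conj_mem_splitGroup_commutator (hG : ∀ g ∈ G, HasLinearGerms g)
    (hover : ¬AdmitsBadOverlap G) (hg : g ∈ G) (hw : w ∈ ⁅G, G⁆) (hy : IsOneBumpFactor y g c d)
    (hz : IsOneBumpFactor z w a b) : y * z * y⁻¹ ∈ SplitGroup ⁅G, G⁆ := by
  have hzS : z ∈ SplitGroup ⁅G, G⁆ := hz.mem_splitGroup hw
  have of_subset (hsub : Ioo a b ⊆ Ioo c d) : y * z * y⁻¹ ∈ SplitGroup ⁅G, G⁆ := by
    rw [hy.isRestr.conj_eq (hz.isRestr.supp_subset.trans hsub)]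
    have hnorm := le_normalizer_splitGroup (fun g hg => (hG g hg).strictMono)
      (Subgroup.normalizer_commutator_ge_left G G)
    exact (Subgroup.mem_normalizer_iff.1 (hnorm hg) z).1 hzS
  rcases hz.isOrbital.disjoint_or_nested hover (Subgroup.commutator_le_self G hw) hg hy.isOrbital
    with hdisj | ⟨rfl, rfl⟩ | ⟨hca, hbd⟩ | ⟨hac, hdb⟩
  · rwa [← (hz.commute_of_le hy hdisj).eq, mul_inv_cancel_right]
  · exact of_subset Subset.rfl
  · exact of_subset (Ioo_subset_Ioo hca.le hbd.le)
  · have hyS := hy.mem_splitGroup_commutator_of_nested hG hover hg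
      (Subgroup.commutator_le_self G hw) hz.isOrbital hac hdb
    exact Subgroup.mul_mem _ (Subgroup.mul_mem _ hyS hzS) (Subgroup.inv_mem _ hyS)

theorem splitGroup_le_normalizer (hG : ∀ g ∈ G, HasLinearGerms g) (hover : ¬AdmitsBadOverlap G) :
    SplitGroup G ≤ Subgroup.normalizer (SplitGroup ⁅G, G⁆ : Set PermR) := by
  refine closure_le_normalizer_closure ?_ ?_
  · rintro y ⟨g, hg, c, d, hy⟩
    exact ⟨g⁻¹, G.inv_mem hg, c, d, hy.inv⟩
  · rintro y ⟨g, hg, c, d, hy⟩ z ⟨w, hw, a, b, hz⟩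
    exact hy.conj_mem_splitGroup_commutator hG hover hg hw hz

theorem IsOneBumpFactor.commutator_mem_splitGroup (hG : ∀ g ∈ G, HasLinearGerms g)
    (hover : ¬AdmitsBadOverlap G) (hf : f ∈ G) (hg : g ∈ G) (hx : IsOneBumpFactor x f a b)
    (hy : IsOneBumpFactor y g c d) : ⁅x, y⁆ ∈ SplitGroup ⁅G, G⁆ := by
  have hnorm := splitGroup_le_normalizer hG hover
  rcases hx.isOrbital.disjoint_or_nested hover hf hg hy.isOrbital
    with hdisj | ⟨rfl, rfl⟩ | ⟨hca, hbd⟩ | ⟨hac, hdb⟩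
  · rw [commutatorElement_eq_one_iff_commute.2 (hx.commute_of_le hy hdisj)]
    exact Subgroup.one_mem _
  · have hmem : ⁅f, g⁆ ∈ ⁅G, G⁆ := Subgroup.commutator_mem_commutator hf hg
    refine (hx.isRestr.commutator hy.isRestr).mem_splitGroup hmem
      (hG _ (Subgroup.commutator_le_self G hmem)) (ap_commutator_eq_self_iff.2 ?_)
      (ap_commutator_eq_self_iff.2 ?_)
    · rw [hx.isOrbital.ap_left, hy.isOrbital.ap_left, hx.isOrbital.ap_left]
    · rw [hx.isOrbital.ap_right, hy.isOrbital.ap_right, hx.isOrbital.ap_right]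
  · exact Subgroup.le_normalizer_iff_commutator_le_left.1 hnorm
      (Subgroup.commutator_mem_commutator
        (hx.mem_splitGroup_commutator_of_nested hG hover hf hg hy.isOrbital hca hbd)
        (hy.mem_splitGroup hg))
  · exact Subgroup.le_normalizer_iff_commutator_le_right.1 hnorm
      (Subgroup.commutator_mem_commutator (hx.mem_splitGroup hf)
        (hy.mem_splitGroup_commutator_of_nested hG hover hg hf hx.isOrbital hac hdb))

theorem commutator_splitGroup_le (hG : ∀ g ∈ G, HasLinearGerms g) (hover : ¬AdmitsBadOverlap G) :
    ⁅SplitGroup G, SplitGroup G⁆ ≤ SplitGroup ⁅G, G⁆ := by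
  refine commutator_closure_le (splitGroup_le_normalizer hG hover) ?_
  rintro x ⟨f, hf, a, b, hx⟩ y ⟨g, hg, c, d, hy⟩
  exact hx.commutator_mem_splitGroup hG hover hf hg hy

theorem derivedSubgroup_splitGroup_le (hG : ∀ g ∈ G, HasLinearGerms g)
    (hover : ¬AdmitsBadOverlap G) (n : ℕ) :
    derivedSubgroup (SplitGroup G) n ≤ SplitGroup (derivedSubgroup G n) := by
  induction n with
  | zero => exact le_rfl
  | succ n ih =>
    have hle := derivedSubgroup_le G n
    exact (Subgroup.commutator_mono ih ih).trans
      (commutator_splitGroup_le (fun g hg => hG g (hle hg)) fun h => hover (h.mono hle))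

theorem derivedSubgroup_splitGroup_eq_bot (hG : ∀ g ∈ G, HasLinearGerms g) {n : ℕ}
    (h : derivedSubgroup G n = ⊥) : derivedSubgroup (SplitGroup G) n = ⊥ := by
  have hover : ¬AdmitsBadOverlap G := fun hover =>
    derivedSubgroup_ne_bot_of_admitsBadOverlap hG hover n h
  have hle := derivedSubgroup_splitGroup_le hG hover n
  rwa [h, splitGroup_bot, le_bot_iff] at hle

end SplitGroup

section PiecewiseLinear

theorem exists_eqOn_affine {φ : ℝ → ℝ} {u v : ℝ} (huv : u < v) (hφ : ContinuousOn φ (Icc u v))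
    (h : ∀ x ∈ Ioo u v, ∃ m b : ℝ, ∀ᶠ y in 𝓝 x, φ y = m * y + b) :
    ∃ m b : ℝ, EqOn φ (fun y => m * y + b) (Icc u v) := by
  have analyticAt_affine (m b x : ℝ) : AnalyticAt ℝ (fun y => m * y + b) x := by fun_prop
  have hanalytic : AnalyticOnNhd ℝ φ (Ioo u v) := fun x hx => by
    obtain ⟨m, b, hmb⟩ := h x hx
    exact (analyticAt_affine m b x).congr (hmb.mono fun _ => Eq.symm)
  obtain ⟨x, hx⟩ := nonempty_Ioo.2 huv
  obtain ⟨m, b, hmb⟩ := h x hx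
  have heq : EqOn φ (fun y => m * y + b) (Ioo u v) :=
    hanalytic.eqOn_of_preconnected_of_eventuallyEq (fun y _ => analyticAt_affine m b y)
      isPreconnected_Ioo hx hmb
  exact ⟨m, b, heq.of_subset_closure hφ (by fun_prop) Ioo_subset_Icc_self
    (closure_Ioo huv.ne).superset⟩

variable {f : PermR} {p u v : ℝ}

theorem isLinearAlong_of_isLocallyAffineAt (hf : StrictMono (ap f)) (hp : ap f p = p)
    (huv : u < v) (haff : ∀ x ∈ Ioo u v, IsLocallyAffineAt f x) (hpuv : p ∈ Icc u v)
    {l : Filter ℝ} (hl : Icc u v ∈ l) : IsLinearAlong f p l := by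
  obtain ⟨m, b, hmb⟩ := exists_eqOn_affine huv (continuous_ap hf).continuousOn haff
  have hpm : p = m * p + b := hp.symm.trans (hmb hpuv)
  refine ⟨m, mem_of_superset hl fun x hx => ?_⟩
  have hxm : ap f x = m * x + b := hmb hx
  rw [mem_ofPred_eq]
  linear_combination hxm - hpm

theorem IsPL.finite_not_isLocallyAffineAt (hf : IsPL f) :
    {x | ¬IsLocallyAffineAt f x}.Finite := by
  refine (hf.2.2.union (toFinite {0, 1})).subset fun x hx => ?_
  by_cases hIoo : x ∈ Ioo 0 1
  · exact .inl ⟨hIoo, hx⟩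
  by_contra hx'
  have hIcc : x ∈ (Icc (0 : ℝ) 1)ᶜ := by
    simp only [mem_union, mem_insert_iff, mem_singleton_iff, not_or] at hx'
    grind
  refine hx ⟨1, 0, ?_⟩
  filter_upwards [isClosed_Icc.isOpen_compl.mem_nhds hIcc] with y hy
  rw [hf.2.1 y fun h => hy (Ioo_subset_Icc_self h), one_mul, add_zero]

theorem IsPL.isLocallyAffineAt_mem_nhdsNE (hf : IsPL f) (p : ℝ) :
    {x | IsLocallyAffineAt f x} ∈ 𝓝[≠] p := by
  have h := mem_codiscrete.1 hf.finite_not_isLocallyAffineAt.compl_mem_codiscrete p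
  simpa only [disjoint_principal_right, compl_compl, compl_ofPred, not_not] using h

theorem IsPL.hasLinearGerms (hf : IsPL f) : HasLinearGerms f where
  strictMono := hf.1
  isBounded_supp := (Metric.isBounded_Ioo (0 : ℝ) 1).subset fun x hx =>
    by_contra fun h => hx (hf.2.1 x h)
  nhdsGT {p} hp := by
    obtain ⟨v, hpv, hv⟩ := mem_nhdsGT_iff_exists_Ioo_subset.1
      (nhdsWithin_mono p (fun _ hx => ne_of_gt hx) (hf.isLocallyAffineAt_mem_nhdsNE p))
    rw [mem_Ioi] at hpv
    exact isLinearAlong_of_isLocallyAffineAt hf.1 hp hpv hv (left_mem_Icc.2 hpv.le)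
      (Icc_mem_nhdsGT hpv)
  nhdsLT {p} hp := by
    obtain ⟨u, hup, hu⟩ := mem_nhdsLT_iff_exists_Ioo_subset.1
      (nhdsWithin_mono p (fun _ hx => ne_of_lt hx) (hf.isLocallyAffineAt_mem_nhdsNE p))
    rw [mem_Iio] at hup
    exact isLinearAlong_of_isLocallyAffineAt hf.1 hp hup hu (right_mem_Icc.2 hup.le)
      (Icc_mem_nhdsLT hup)

end PiecewiseLinear

theorem statement12_general (G H : Subgroup PermR) (hG : ∀ g ∈ G, HasLinearGerms g)
    (hGH : G ≤ H) (hHS : H ≤ SplitGroup G) :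
    derivedLength ↥G = derivedLength ↥H ∧ (Group.IsSolvable ↥G ↔ Group.IsSolvable ↥H) := by
  have bot_iff (n : ℕ) : derivedSeries ↥G n = ⊥ ↔ derivedSeries ↥H n = ⊥ := by
    rw [derivedSeries_eq_bot_iff, derivedSeries_eq_bot_iff]
    refine ⟨fun h => le_bot_iff.1 ?_, fun h => le_bot_iff.1 ?_⟩
    · exact derivedSubgroup_splitGroup_eq_bot hG h ▸ derivedSubgroup_mono hHS n
    · exact h ▸ derivedSubgroup_mono hGH n
  refine ⟨congrArg sInf (Set.ext bot_iff), ?_⟩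
  rw [Group.isSolvable_def, Group.isSolvable_def]
  exact exists_congr bot_iff

end Development

theorem statement12 (G H : Subgroup PermR) (hPL : ∀ g ∈ G, IsPL g)
    (hGH : G ≤ H) (hHS : H ≤ SplitGroup G) :
    derivedLength ↥G = derivedLength ↥H ∧ (IsSolvable ↥G ↔ IsSolvable ↥H) :=
  statement12_general G H (fun g hg => (hPL g hg).hasLinearGerms) hGH hHS

end PLPaper
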